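/- arXiv:1712.04150 — 4 statements merged into one kernel-verified Lean document; each statement's English description precedes it below -/
import Mathlib

section
/- Let d = 2 or d = 3, let Δt > 0 and L ≥ 0 satisfy Δt·L ≤ 1/4, let w : ℝ^d → ℝ^d be differentiable at a point x with the Frobenius norm of its Jacobian matrix at x at most L, and let X₁(w)(x) = x − Δt·w(x). Then X₁(w) is differentiable at x and the determinant of its derivative at x (that is, the determinant of the linear map v ↦ v − Δt·(Dw(x))(v)) satisfies 1/2 ≤ det(D(X₁(w))(x)) ≤ 3/2. -/
/-- The Frobenius norm of the Jacobian matrix of `f` at `x`. -/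
noncomputable def jacobianFrobeniusNorm {d m : ℕ}
    (f : EuclideanSpace ℝ (Fin d) → EuclideanSpace ℝ (Fin m))
    (x : EuclideanSpace ℝ (Fin d)) : ℝ :=
  Real.sqrt (∑ i, ∑ j, (fderiv ℝ f x (EuclideanSpace.single j (1 : ℝ)) i) ^ 2)

/-- AM-GM for three nonnegative reals, in cubed form. -/
theorem mul_mul_le_cube_add_div_three {p q r : ℝ} (hp : 0 ≤ p) (hq : 0 ≤ q) (hr : 0 ≤ r) :
    p * q * r ≤ ((p + q + r) / 3) ^ 3 := by
  nlinarith [mul_nonneg hp (sq_nonneg (q - r)), mul_nonneg hq (sq_nonneg (p - r)),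
    mul_nonneg hr (sq_nonneg (p - q)),
    mul_nonneg (add_nonneg (add_nonneg hp hq) hr) (add_nonneg (add_nonneg
      (sq_nonneg (p - q)) (sq_nonneg (q - r))) (sq_nonneg (p - r)))]

/-- Hadamard's inequality for real `3 × 3` matrices. -/
theorem Matrix.det_fin_three_sq_le_prod (A : Matrix (Fin 3) (Fin 3) ℝ) :
    A.det ^ 2 ≤ (∑ j, A 0 j ^ 2) * (∑ j, A 1 j ^ 2) * (∑ j, A 2 j ^ 2) := by
  rw [Matrix.det_fin_three]
  simp only [Fin.sum_univ_three]
  generalize A 0 0 = a, A 0 1 = b, A 0 2 = c, A 1 0 = u, A 1 1 = v, A 1 2 = w,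
    A 2 0 = x, A 2 1 = y, A 2 2 = z
  calc _ ≤ (a ^ 2 + b ^ 2 + c ^ 2) *
        ((v * z - w * y) ^ 2 + (w * x - u * z) ^ 2 + (u * y - v * x) ^ 2) := by
        linear_combination sq_nonneg (a * (w * x - u * z) - b * (v * z - w * y)) +
          sq_nonneg (a * (u * y - v * x) - c * (v * z - w * y)) +
          sq_nonneg (b * (u * y - v * x) - c * (w * x - u * z))
    _ ≤ _ := by
        rw [mul_assoc]
        gcongr
        linear_combination sq_nonneg (u * x + v * y + w * z)

theorem Matrix.det_one_sub_fin_two_mem_Icc (B : Matrix (Fin 2) (Fin 2) ℝ)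
    (hB : ∑ i, ∑ j, B i j ^ 2 ≤ 1 / 16) : (1 - B).det ∈ Set.Icc (1 / 2 : ℝ) (3 / 2) := by
  rw [Matrix.det_fin_two]
  simp only [Fin.sum_univ_two] at hB
  simp
  generalize B 0 0 = a, B 0 1 = b, B 1 0 = c, B 1 1 = e at *
  have htr : |a + e| ≤ 2 / 5 := abs_le_of_sq_le_sq (by nlinarith [sq_nonneg (a - e)]) (by norm_num)
  obtain ⟨h₁, h₂⟩ := abs_le.1 htr
  constructor
  · nlinarith [sq_nonneg (a + e), sq_nonneg (b - c)]
  · nlinarith [sq_nonneg (a - e), sq_nonneg (b + c)]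

theorem Matrix.det_one_sub_fin_three_mem_Icc (B : Matrix (Fin 3) (Fin 3) ℝ)
    (hB : ∑ i, ∑ j, B i j ^ 2 ≤ 1 / 16) : (1 - B).det ∈ Set.Icc (1 / 2 : ℝ) (3 / 2) := by
  have hdet : |B.det| ≤ 1 / 250 := by
    refine abs_le_of_sq_le_sq ?_ (by norm_num)
    have hrow (i : Fin 3) : 0 ≤ ∑ j, B i j ^ 2 := Finset.sum_nonneg fun _ _ => sq_nonneg _
    calc B.det ^ 2 ≤ _ := B.det_fin_three_sq_le_prod
      _ ≤ _ := mul_mul_le_cube_add_div_three (hrow 0) (hrow 1) (hrow 2)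
      _ ≤ (1 / 16 / 3) ^ 3 := by
        rw [Fin.sum_univ_three] at hB
        have := hrow 0
        have := hrow 1
        have := hrow 2
        gcongr
      _ ≤ _ := by norm_num
  obtain ⟨hd₁, hd₂⟩ := abs_le.1 hdet
  rw [Matrix.det_fin_three] at hd₁ hd₂ ⊢
  simp only [Fin.sum_univ_three] at hB
  simp
  generalize B 0 0 = a, B 0 1 = b, B 0 2 = c, B 1 0 = u, B 1 1 = v, B 1 2 = w,
    B 2 0 = x, B 2 1 = y, B 2 2 = z at *
  have htr : |a + v + z| ≤ 4331 / 10000 := by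
    refine abs_le_of_sq_le_sq ?_ (by norm_num)
    nlinarith [sq_nonneg (a - v), sq_nonneg (v - z), sq_nonneg (a - z), sq_nonneg b, sq_nonneg c,
      sq_nonneg u, sq_nonneg w, sq_nonneg x, sq_nonneg y]
  obtain ⟨h₁, h₂⟩ := abs_le.1 htr
  have he₁ : a * v + a * z + v * z - b * u - c * x - w * y ≤ 1 / 16 := by
    nlinarith [sq_nonneg (a - v), sq_nonneg (v - z), sq_nonneg (a - z), sq_nonneg (b + u),
      sq_nonneg (c + x), sq_nonneg (w + y), sq_nonneg b, sq_nonneg c,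
      sq_nonneg u, sq_nonneg w, sq_nonneg x, sq_nonneg y]
  have he₂ : -(1 / 32) ≤ a * v + a * z + v * z - b * u - c * x - w * y := by
    nlinarith [sq_nonneg (a + v + z), sq_nonneg (b - u), sq_nonneg (c - x), sq_nonneg (w - y)]
  constructor <;> linarith

/-- If `Δt·L ≤ 1/4` and the Jacobian of `w` at `x` has Frobenius norm at most `L`,
then `X₁(w) : x ↦ x - Δt·w(x)` is differentiable at `x` and the determinant of its
derivative there lies in `[1/2, 3/2]`. -/
theorem jacobian_det_bounds (d : ℕ) (hd : d = 2 ∨ d = 3)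
    (Δt L : ℝ) (hΔt : 0 < Δt) (hL : 0 ≤ L) (hΔtL : Δt * L ≤ 1 / 4)
    (w : EuclideanSpace ℝ (Fin d) → EuclideanSpace ℝ (Fin d))
    (x : EuclideanSpace ℝ (Fin d))
    (hw : DifferentiableAt ℝ w x)
    (hJ : jacobianFrobeniusNorm w x ≤ L) :
    DifferentiableAt ℝ (fun y => y - Δt • w y) x ∧
      1 / 2 ≤ LinearMap.det (fderiv ℝ (fun y => y - Δt • w y) x).toLinearMap ∧
      LinearMap.det (fderiv ℝ (fun y => y - Δt • w y) x).toLinearMap ≤ 3 / 2 := by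
  have hX := (hasFDerivAt_id x).sub (hw.hasFDerivAt.const_smul Δt)
  refine ⟨hX.differentiableAt, ?_⟩
  let b := (EuclideanSpace.basisFun (Fin d) ℝ).toBasis
  let B : Matrix (Fin d) (Fin d) ℝ := Δt • LinearMap.toMatrix b b (fderiv ℝ w x).toLinearMap
  have hfderiv : fderiv ℝ (fun y => y - Δt • w y) x =
      ContinuousLinearMap.id ℝ _ - Δt • fderiv ℝ w x := hX.fderiv
  have hdet : LinearMap.det (fderiv ℝ (fun y => y - Δt • w y) x).toLinearMap = (1 - B).det := by
    rw [hfderiv, ← LinearMap.det_toMatrix b, ContinuousLinearMap.toLinearMap_sub, map_sub,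
      ContinuousLinearMap.toLinearMap_smul, map_smul, ContinuousLinearMap.coe_id,
      LinearMap.toMatrix_id]
  have hB : ∑ i, ∑ j, B i j ^ 2 ≤ 1 / 16 := by
    have hsum : ∑ i, ∑ j, B i j ^ 2 =
        Δt ^ 2 * ∑ i, ∑ j, (fderiv ℝ w x (EuclideanSpace.single j (1 : ℝ)) i) ^ 2 := by
      simp [B, b, LinearMap.toMatrix_apply, mul_pow, Finset.mul_sum]
    calc _ ≤ Δt ^ 2 * L ^ 2 := by
          rw [hsum]
          gcongr
          exact (Real.sqrt_le_left hL).1 hJ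
      _ = (Δt * L) ^ 2 := by ring
      _ ≤ (1 / 4) ^ 2 := by gcongr
      _ = 1 / 16 := by norm_num
  rw [hdet]
  obtain rfl | rfl := hd
  · exact B.det_one_sub_fin_two_mem_Icc hB
  · exact B.det_one_sub_fin_three_mem_Icc hB
end

section
/- Let d = 2 or d = 3, let Δt > 0 and L ≥ 0 satisfy Δt·L ≤ 1/4, and let w : ℝ^d → ℝ^d be everywhere differentiable with the Frobenius norm of its Jacobian matrix at every point at most L. Then for every measurable function g : ℝ^d → [0, ∞], one has ∫_{ℝ^d} g(x − Δt·w(x)) dx ≤ 2·∫_{ℝ^d} g(y) dy, where the integrals are taken with respect to Lebesgue measure. -/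
open MeasureTheory

/-- A lower bound for `det (1 - A)` when `A` is a `2 × 2` matrix of Frobenius norm at most `1/4`. -/
lemma half_le_det_one_sub_fin_two (A : Matrix (Fin 2) (Fin 2) ℝ)
    (h : ∑ i, ∑ j, A i j ^ 2 ≤ 1 / 16) : 1 / 2 ≤ (1 - A).det := by
  simp only [Fin.sum_univ_two] at h
  simp only [Matrix.det_fin_two, Matrix.sub_apply, Matrix.one_apply_eq,
    Matrix.one_apply_ne (show (0 : Fin 2) ≠ 1 by decide),
    Matrix.one_apply_ne (show (1 : Fin 2) ≠ 0 by decide)]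
  generalize A 0 0 = a at *
  generalize A 0 1 = b at *
  generalize A 1 0 = c at *
  generalize A 1 1 = e at *
  have htr : a + e ≤ 0.36 := by
    nlinarith [sq_nonneg (a - e), sq_nonneg b, sq_nonneg c]
  nlinarith [sq_nonneg (a + e), sq_nonneg (b - c)]

/-- The trilinear bound used for the terms of a `3 × 3` determinant. -/
lemma abs_mul_mul_le_of_abs_le_quarter {a : ℝ} (ha : |a| ≤ 1 / 4) (b c : ℝ) :
    |a * b * c| ≤ (b ^ 2 + c ^ 2) / 8 := by
  rw [mul_assoc, abs_mul]
  have hbc : |b * c| ≤ (b ^ 2 + c ^ 2) / 2 := by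
    rw [abs_le]
    constructor <;> nlinarith [sq_nonneg (b + c), sq_nonneg (b - c)]
  calc |a| * |b * c| ≤ 1 / 4 * ((b ^ 2 + c ^ 2) / 2) := by gcongr
    _ = (b ^ 2 + c ^ 2) / 8 := by ring

/-- A lower bound for `det (1 - A)` when `A` is a `3 × 3` matrix of Frobenius norm at most `1/4`. -/
lemma half_le_det_one_sub_fin_three (A : Matrix (Fin 3) (Fin 3) ℝ)
    (h : ∑ i, ∑ j, A i j ^ 2 ≤ 1 / 16) : 1 / 2 ≤ (1 - A).det := by
  simp only [Fin.sum_univ_three] at h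
  simp only [Matrix.det_fin_three, Matrix.sub_apply, Matrix.one_apply_eq,
    Matrix.one_apply_ne (show (0 : Fin 3) ≠ 1 by decide),
    Matrix.one_apply_ne (show (1 : Fin 3) ≠ 0 by decide),
    Matrix.one_apply_ne (show (0 : Fin 3) ≠ 2 by decide),
    Matrix.one_apply_ne (show (2 : Fin 3) ≠ 0 by decide),
    Matrix.one_apply_ne (show (1 : Fin 3) ≠ 2 by decide),
    Matrix.one_apply_ne (show (2 : Fin 3) ≠ 1 by decide)]
  generalize A 0 0 = a at *
  generalize A 0 1 = b at *
  generalize A 0 2 = c at *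
  generalize A 1 0 = p at *
  generalize A 1 1 = q at *
  generalize A 1 2 = r at *
  generalize A 2 0 = u at *
  generalize A 2 1 = v at *
  generalize A 2 2 = z at *
  have sa := sq_nonneg a
  have sb := sq_nonneg b
  have sc := sq_nonneg c
  have sp := sq_nonneg p
  have sq := sq_nonneg q
  have sr := sq_nonneg r
  have su := sq_nonneg u
  have sv := sq_nonneg v
  have sz := sq_nonneg z
  have ha : |a| ≤ 1 / 4 := abs_le_of_sq_le_sq (by linarith) (by norm_num)
  have hb : |b| ≤ 1 / 4 := abs_le_of_sq_le_sq (by linarith) (by norm_num)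
  have hc : |c| ≤ 1 / 4 := abs_le_of_sq_le_sq (by linarith) (by norm_num)
  have htr : a + q + z ≤ 0.435 := by
    refine le_of_sq_le_sq ?_ (by norm_num)
    nlinarith [sq_nonneg (a - q), sq_nonneg (a - z), sq_nonneg (q - z)]
  have hminors : -(1 / 32) ≤ a * q + q * z + a * z - b * p - c * u - r * v := by
    nlinarith [sq_nonneg (a + q + z), sq_nonneg (b - p), sq_nonneg (c - u), sq_nonneg (r - v)]
  have h₁ := abs_le.1 (abs_mul_mul_le_of_abs_le_quarter ha q z)
  have h₂ := abs_le.1 (abs_mul_mul_le_of_abs_le_quarter ha r v)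
  have h₃ := abs_le.1 (abs_mul_mul_le_of_abs_le_quarter hb p z)
  have h₄ := abs_le.1 (abs_mul_mul_le_of_abs_le_quarter hb r u)
  have h₅ := abs_le.1 (abs_mul_mul_le_of_abs_le_quarter hc p v)
  have h₆ := abs_le.1 (abs_mul_mul_le_of_abs_le_quarter hc q u)
  linarith [h₁.2, h₂.1, h₃.1, h₄.2, h₅.2, h₆.1]

/-- The operator norm of the derivative is at most the Frobenius norm of the Jacobian. -/
lemma norm_fderiv_le_jacobianFrobeniusNorm {d m : ℕ}
    (f : EuclideanSpace ℝ (Fin d) → EuclideanSpace ℝ (Fin m)) (x : EuclideanSpace ℝ (Fin d)) :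
    ‖fderiv ℝ f x‖ ≤ jacobianFrobeniusNorm f x := by
  refine ContinuousLinearMap.opNorm_le_bound _ (Real.sqrt_nonneg _) fun v => ?_
  have hcoord (i : Fin m) :
      fderiv ℝ f x v i = ∑ j, fderiv ℝ f x (EuclideanSpace.single j (1 : ℝ)) i * v j := by
    conv_lhs => rw [← (EuclideanSpace.basisFun (Fin d) ℝ).sum_repr v]
    simp [mul_comm]
  rw [EuclideanSpace.norm_eq, EuclideanSpace.norm_eq, jacobianFrobeniusNorm,
    ← Real.sqrt_mul (by positivity)]
  refine Real.sqrt_le_sqrt ?_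
  rw [Finset.sum_mul]
  refine Finset.sum_le_sum fun i _ => ?_
  simp only [Real.norm_eq_abs, sq_abs]
  rw [hcoord i]
  exact Finset.sum_mul_sq_le_sq_mul_sq _ _ _

/-- The determinant of `1 - c • f'(x)` is at least `1/2` in dimensions two and three when the
Frobenius norm of `c • f'(x)` is at most `1/4`. -/
lemma half_le_det_id_sub_smul_fderiv {d : ℕ} (hd : d = 2 ∨ d = 3) {c L : ℝ} (hc : 0 < c)
    (hcL : c * L ≤ 1 / 4) (w : EuclideanSpace ℝ (Fin d) → EuclideanSpace ℝ (Fin d))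
    (x : EuclideanSpace ℝ (Fin d)) (hJ : jacobianFrobeniusNorm w x ≤ L) :
    1 / 2 ≤ (ContinuousLinearMap.id ℝ _ - c • fderiv ℝ w x).det := by
  let b := (EuclideanSpace.basisFun (Fin d) ℝ).toBasis
  let A : Matrix (Fin d) (Fin d) ℝ := LinearMap.toMatrix b b (c • fderiv ℝ w x).toLinearMap
  have hdet : (ContinuousLinearMap.id ℝ _ - c • fderiv ℝ w x).det = (1 - A).det := by
    rw [ContinuousLinearMap.det, ← LinearMap.det_toMatrix b, ← LinearMap.toMatrix_id b, ← map_sub]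
    rfl
  have hA : ∑ i, ∑ j, A i j ^ 2 ≤ 1 / 16 := by
    have hsum : ∑ i, ∑ j, A i j ^ 2 = (c * jacobianFrobeniusNorm w x) ^ 2 := by
      rw [mul_pow, jacobianFrobeniusNorm, Real.sq_sqrt (by positivity), Finset.mul_sum]
      refine Finset.sum_congr rfl fun i _ => ?_
      rw [Finset.mul_sum]
      refine Finset.sum_congr rfl fun j _ => ?_
      simp [A, b, LinearMap.toMatrix_apply, mul_pow]
    have hnonneg : 0 ≤ jacobianFrobeniusNorm w x := Real.sqrt_nonneg _
    have hle : c * jacobianFrobeniusNorm w x ≤ 1 / 4 :=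
      (mul_le_mul_of_nonneg_left hJ hc.le).trans hcL
    rw [hsum]
    calc (c * jacobianFrobeniusNorm w x) ^ 2 ≤ (1 / 4) ^ 2 := by gcongr
      _ = 1 / 16 := by norm_num
  rw [hdet]
  clear_value A
  rcases hd with rfl | rfl
  · exact half_le_det_one_sub_fin_two A hA
  · exact half_le_det_one_sub_fin_three A hA

/-- If `Δt·L ≤ 1/4` and `w` is everywhere differentiable with Jacobian Frobenius norm
at most `L`, then the integral of `g(x - Δt·w(x))` is at most twice that of `g`. -/
theorem lintegral_comp_characteristic_le (d : ℕ) (hd : d = 2 ∨ d = 3)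
    (Δt L : ℝ) (hΔt : 0 < Δt) (hL : 0 ≤ L) (hΔtL : Δt * L ≤ 1 / 4)
    (w : EuclideanSpace ℝ (Fin d) → EuclideanSpace ℝ (Fin d))
    (hw : Differentiable ℝ w)
    (hJ : ∀ x, jacobianFrobeniusNorm w x ≤ L)
    (g : EuclideanSpace ℝ (Fin d) → ENNReal) (hg : Measurable g) :
    ∫⁻ x, g (x - Δt • w x) ≤ 2 * ∫⁻ y, g y := by
  have hderiv (x : EuclideanSpace ℝ (Fin d)) : HasFDerivAt (fun x => x - Δt • w x)
      (ContinuousLinearMap.id ℝ _ - Δt • fderiv ℝ w x) x :=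
    (hasFDerivAt_id x).sub ((hw x).hasFDerivAt.const_smul Δt)
  have hinj : Function.Injective fun x => x - Δt • w x := by
    intro x y hxy
    have hlip : ‖w x - w y‖ ≤ L * ‖x - y‖ :=
      convex_univ.norm_image_sub_le_of_norm_fderiv_le (𝕜 := ℝ) (fun z _ => hw z)
        (fun z _ => (norm_fderiv_le_jacobianFrobeniusNorm w z).trans (hJ z))
        (Set.mem_univ y) (Set.mem_univ x)
    have heq : x - y = Δt • (w x - w y) := by
      rw [smul_sub, sub_eq_sub_iff_sub_eq_sub]
      exact hxy
    have hnorm : ‖x - y‖ = Δt * ‖w x - w y‖ := by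
      conv_lhs => rw [heq]
      rw [norm_smul, Real.norm_of_nonneg hΔt.le]
    have hle : ‖x - y‖ ≤ 1 / 4 * ‖x - y‖ :=
      calc ‖x - y‖ = Δt * ‖w x - w y‖ := hnorm
        _ ≤ Δt * (L * ‖x - y‖) := by gcongr
        _ = Δt * L * ‖x - y‖ := by ring
        _ ≤ 1 / 4 * ‖x - y‖ := by gcongr
    exact sub_eq_zero.1 (norm_le_zero_iff.1 (by linarith))
  have hpoint (x : EuclideanSpace ℝ (Fin d)) : g (x - Δt • w x) ≤
      2 * (ENNReal.ofReal |(ContinuousLinearMap.id ℝ _ - Δt • fderiv ℝ w x).det| *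
        g (x - Δt • w x)) := by
    have hdet := half_le_det_id_sub_smul_fderiv hd hΔt hΔtL w x (hJ x)
    have hone : 1 ≤ 2 *
        ENNReal.ofReal |(ContinuousLinearMap.id ℝ _ - Δt • fderiv ℝ w x).det| := by
      generalize (ContinuousLinearMap.id ℝ _ - Δt • fderiv ℝ w x).det = D at hdet
      rw [← ENNReal.ofReal_ofNat 2, ← ENNReal.ofReal_mul (by norm_num), ENNReal.one_le_ofReal]
      linarith [le_abs_self D]
    rw [← mul_assoc]
    exact le_mul_of_one_le_left' hone
  have hchange := lintegral_image_eq_lintegral_abs_det_fderiv_mul volume MeasurableSet.univ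
    (fun x _ => (hderiv x).hasFDerivWithinAt) hinj.injOn g
  rw [Measure.restrict_univ] at hchange
  calc ∫⁻ x, g (x - Δt • w x)
      ≤ ∫⁻ x, 2 * (ENNReal.ofReal |(ContinuousLinearMap.id ℝ _ - Δt • fderiv ℝ w x).det| *
          g (x - Δt • w x)) := lintegral_mono hpoint
    _ = 2 * ∫⁻ y in (fun x => x - Δt • w x) '' Set.univ, g y := by
      rw [lintegral_const_mul' _ _ (by norm_num), hchange]
    _ ≤ 2 * ∫⁻ y, g y := by
      gcongr
      exact Measure.restrict_le_self
end

section
/- Let Ω ⊆ ℝ^d be a Lebesgue-measurable set, let Δt > 0 and K ≥ 0 satisfy K·Δt ≤ 1/2, and let f : ℝ^d → ℝ^d be a map that is differentiable at every point of Ω, injective on Ω, maps Ω onto Ω, and satisfies det(Df(x)) ≥ 1 − K·Δt for every x ∈ Ω. Then for every measurable function v : ℝ^d → ℝ^m one has ∫_Ω ‖v(f(x))‖² dx ≤ (1 + 2·K·Δt) · ∫_Ω ‖v(y)‖² dy, where the integrals are taken with respect to Lebesgue measure. -/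
open MeasureTheory

/-- Abstract change-of-variables stability bound: if `f` maps a measurable set `Ω`
bijectively onto itself, is differentiable on `Ω`, and its Jacobian determinant
is bounded below by `1 - K·Δt` with `K·Δt ≤ 1/2`, then
`∫_Ω ‖v(f(x))‖² dx ≤ (1 + 2·K·Δt) ∫_Ω ‖v(y)‖² dy`. -/
theorem sq_norm_comp_integral_le (d m : ℕ)
    (Ω : Set (EuclideanSpace ℝ (Fin d))) (hΩ : MeasurableSet Ω)
    (Δt K : ℝ) (hΔt : 0 < Δt) (hK : 0 ≤ K) (hKΔt : K * Δt ≤ 1 / 2)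
    (f : EuclideanSpace ℝ (Fin d) → EuclideanSpace ℝ (Fin d))
    (hf : ∀ x ∈ Ω, DifferentiableAt ℝ f x)
    (hinj : Set.InjOn f Ω) (honto : f '' Ω = Ω)
    (hdet : ∀ x ∈ Ω, 1 - K * Δt ≤ LinearMap.det (fderiv ℝ f x).toLinearMap)
    (v : EuclideanSpace ℝ (Fin d) → EuclideanSpace ℝ (Fin m)) (hv : Measurable v) :
    ∫⁻ x in Ω, (‖v (f x)‖₊ : ENNReal) ^ 2 ≤
      ENNReal.ofReal (1 + 2 * K * Δt) * ∫⁻ y in Ω, (‖v y‖₊ : ENNReal) ^ 2 := by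
  have hderiv : ∀ x ∈ Ω, HasFDerivWithinAt f (fderiv ℝ f x) Ω x := fun x hx =>
    (hf x hx).hasFDerivAt.hasFDerivWithinAt
  have hcov := lintegral_image_eq_lintegral_abs_det_fderiv_mul volume hΩ hderiv hinj
    (fun y => (‖v y‖₊ : ENNReal) ^ 2)
  rw [honto] at hcov
  rw [hcov, ← lintegral_const_mul' _ _ ENNReal.ofReal_ne_top]
  refine setLIntegral_mono' hΩ fun x hx => ?_
  have hKΔt_nonneg : 0 ≤ K * Δt := mul_nonneg hK hΔt.le
  have hdet_abs : 1 - K * Δt ≤ |(fderiv ℝ f x).det| := (hdet x hx).trans (le_abs_self _)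
  have hfactor : 1 ≤ (1 + 2 * K * Δt) * |(fderiv ℝ f x).det| := by
    nlinarith [mul_le_mul_of_nonneg_left hdet_abs (by linarith : 0 ≤ 1 + 2 * (K * Δt))]
  rw [← mul_assoc, ← ENNReal.ofReal_mul (by linarith)]
  exact le_mul_of_one_le_left zero_le (ENNReal.one_le_ofReal.mpr hfactor)
end

section
/- Let d = 2 or d = 3. There exists a constant c > 0, depending only on d, with the following property: for all Δt > 0 and L ≥ 0 with Δt·L ≤ 1/4, for every everywhere-differentiable map w : ℝ^d → ℝ^d whose Jacobian matrix has Frobenius norm at most L at every point, and for every measurable v : ℝ^d → ℝ^m, one has ∫_{ℝ^d} ‖v(x − Δt·w(x))‖² dx ≤ (1 + c·L·Δt) · ∫_{ℝ^d} ‖v(y)‖² dy, where the integrals are with respect to Lebesgue measure. -/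
open MeasureTheory

theorem ContinuousLinearMap.norm_le_sqrt_sum_sq {d m : ℕ}
    (A : EuclideanSpace ℝ (Fin d) →L[ℝ] EuclideanSpace ℝ (Fin m)) :
    ‖A‖ ≤ √(∑ i, ∑ j, (A (EuclideanSpace.single j (1 : ℝ)) i) ^ 2) := by
  refine A.opNorm_le_bound (Real.sqrt_nonneg _) fun x ↦ ?_
  have expand (i : Fin m) : A x i = ∑ j, A (EuclideanSpace.single j (1 : ℝ)) i * x j := by
    conv_lhs => rw [← (EuclideanSpace.basisFun (Fin d) ℝ).sum_repr x]
    simp [map_sum, mul_comm]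
  rw [EuclideanSpace.norm_eq, EuclideanSpace.norm_eq, ← Real.sqrt_mul (by positivity),
    Finset.sum_mul]
  refine Real.sqrt_le_sqrt (Finset.sum_le_sum fun i _ ↦ ?_)
  simp only [Real.norm_eq_abs, sq_abs]
  rw [expand]
  exact Finset.sum_mul_sq_le_sq_mul_sq _ _ _

theorem lipschitzWith_of_jacobianFrobeniusNorm_le {d m : ℕ}
    {w : EuclideanSpace ℝ (Fin d) → EuclideanSpace ℝ (Fin m)} (hw : Differentiable ℝ w)
    {L : NNReal} (hL : ∀ x, jacobianFrobeniusNorm w x ≤ L) : LipschitzWith L w :=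
  lipschitzWith_of_nnnorm_fderiv_le hw fun x ↦
    NNReal.coe_le_coe.1 ((fderiv ℝ w x).norm_le_sqrt_sum_sq.trans (hL x))

theorem AntilipschitzWith.addHaar_preimage_le {E : Type*} [NormedAddCommGroup E]
    [NormedSpace ℝ E] [FiniteDimensional ℝ E] [MeasurableSpace E] [BorelSpace E]
    (μ : Measure E) [μ.IsAddHaarMeasure] {K : NNReal} {f : E → E} (hf : AntilipschitzWith K f)
    (s : Set E) : μ (f ⁻¹' s) ≤ (K : ENNReal) ^ Module.finrank ℝ E * μ s := by
  rw [Measure.isAddLeftInvariant_eq_smul μ (Measure.hausdorffMeasure (Module.finrank ℝ E))]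
  have h := hf.hausdorffMeasure_preimage_le (d := Module.finrank ℝ E) (Nat.cast_nonneg _) s
  rw [ENNReal.rpow_natCast] at h
  simp only [Measure.smul_apply, ENNReal.smul_def, smul_eq_mul]
  rw [mul_left_comm]
  gcongr

theorem AntilipschitzWith.lintegral_comp_le {E : Type*} [NormedAddCommGroup E]
    [NormedSpace ℝ E] [FiniteDimensional ℝ E] [MeasurableSpace E] [BorelSpace E]
    (μ : Measure E) [μ.IsAddHaarMeasure] {K : NNReal} {f : E → E} (hf : AntilipschitzWith K f)
    (hfm : Measurable f) {g : E → ENNReal} (hg : Measurable g) :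
    ∫⁻ x, g (f x) ∂μ ≤ (K : ENNReal) ^ Module.finrank ℝ E * ∫⁻ y, g y ∂μ := by
  have hle : μ.map f ≤ (K : ENNReal) ^ Module.finrank ℝ E • μ :=
    Measure.le_iff.2 fun s hs ↦ by
      rw [Measure.map_apply hfm hs]
      exact hf.addHaar_preimage_le μ s
  calc ∫⁻ x, g (f x) ∂μ = ∫⁻ y, g y ∂(μ.map f) := (lintegral_map hg hfm).symm
    _ ≤ ∫⁻ y, g y ∂((K : ENNReal) ^ Module.finrank ℝ E • μ) := lintegral_mono' hle le_rfl
    _ = _ := by rw [lintegral_smul_measure, smul_eq_mul]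

theorem LipschitzWith.antilipschitzWith_sub_smul {E : Type*} [NormedAddCommGroup E]
    [NormedSpace ℝ E] {w : E → E} {L t : NNReal} (hw : LipschitzWith L w) (h : t * L < 1) :
    AntilipschitzWith (1 - t * L)⁻¹ fun x ↦ x - (t : ℝ) • w x := by
  have hs : LipschitzWith (t * L) fun x ↦ (t : ℝ) • w x := by
    simpa [Function.comp_def] using (lipschitzWith_smul (t : ℝ)).comp hw
  simpa [sub_eq_add_neg] using AntilipschitzWith.id.add_lipschitzWith hs.neg (by simpa using h)

theorem inv_one_sub_pow_le {a : ℝ} (ha : 0 ≤ a) (ha' : a ≤ 1 / 4) {d : ℕ} (hd : d ≤ 3) :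
    ((1 - a)⁻¹) ^ d ≤ 1 + 10 * a := by
  have h1 : (1 - a)⁻¹ ≤ 1 + 2 * a := by
    rw [inv_le_iff_one_le_mul₀ (by linarith)]
    nlinarith
  calc ((1 - a)⁻¹) ^ d ≤ (1 + 2 * a) ^ d :=
        pow_le_pow_left₀ (inv_nonneg.2 (by linarith)) h1 d
    _ ≤ (1 + 2 * a) ^ 3 := pow_le_pow_right₀ (by linarith) hd
    _ ≤ 1 + 10 * a := by
        nlinarith [mul_nonneg ha (sub_nonneg.2 ha'), mul_nonneg (sq_nonneg a) (sub_nonneg.2 ha')]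

/-- There is a constant `c > 0` depending only on `d` such that
`∫ ‖v(x - Δt·w(x))‖² dx ≤ (1 + c·L·Δt) ∫ ‖v(y)‖² dy` whenever `Δt·L ≤ 1/4` and the
Jacobian of `w` has Frobenius norm at most `L` everywhere. -/
theorem exists_const_sq_norm_comp_le (d : ℕ) (hd : d = 2 ∨ d = 3) :
    ∃ c : ℝ, 0 < c ∧
      ∀ (m : ℕ) (Δt L : ℝ), 0 < Δt → 0 ≤ L → Δt * L ≤ 1 / 4 →
        ∀ w : EuclideanSpace ℝ (Fin d) → EuclideanSpace ℝ (Fin d),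
          Differentiable ℝ w → (∀ x, jacobianFrobeniusNorm w x ≤ L) →
          ∀ v : EuclideanSpace ℝ (Fin d) → EuclideanSpace ℝ (Fin m),
            Measurable v →
            ∫⁻ x, (‖v (x - Δt • w x)‖₊ : ENNReal) ^ 2 ≤
              ENNReal.ofReal (1 + c * L * Δt) * ∫⁻ y, (‖v y‖₊ : ENNReal) ^ 2 := by
  refine ⟨10, by norm_num, fun m Δt L hΔt hL hΔtL w hw hJ v hv ↦ ?_⟩
  lift Δt to NNReal using hΔt.le
  lift L to NNReal using hL
  have hlt : Δt * L < 1 := by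
    rw [← NNReal.coe_lt_coe]
    push_cast
    linarith
  have hanti := (lipschitzWith_of_jacobianFrobeniusNorm_le hw hJ).antilipschitzWith_sub_smul hlt
  have hmeas : Measurable fun x ↦ x - (Δt : ℝ) • w x :=
    (continuous_id.sub (hw.continuous.const_smul (Δt : ℝ))).measurable
  refine (hanti.lintegral_comp_le volume hmeas (hv.nnnorm.coe_nnreal_ennreal.pow_const 2)).trans ?_
  gcongr
  rw [finrank_euclideanSpace_fin, ← ENNReal.coe_pow, ← ENNReal.ofReal_coe_nnreal]
  refine ENNReal.ofReal_le_ofReal ?_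
  have hbound := inv_one_sub_pow_le (by positivity) hΔtL (d := d) (by omega)
  rw [NNReal.coe_pow, NNReal.coe_inv, NNReal.coe_sub hlt.le]
  push_cast
  linarith
end
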